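/- For each integer k ≥ 0, define the weight function w_{3,k}(λ,x) = k!·[1 − e^{−x/λ} · Σ_{j=0}^{k} (x/λ)^j / j!] for λ, x > 0. Then w_{3,k} is strictly totally positive of order infinity on (0,∞)²: for every r ≥ 1 and all λ₁ > λ₂ > ⋯ > λ_r > 0 and x₁ > x₂ > ⋯ > x_r > 0, the r×r determinant det( (w_{3,k}(λ_i,x_j))_{i,j=1}^r ) is strictly positive. -/

import Mathlib

/-! The derivative in `x` of `w_{3,k}(λ, x)` is `λ⁻¹ ^ (k + 1) * exp (-λ⁻¹ * x) * x ^ k`, which up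
to positive factors depending on `λ` alone and on `x` alone is the exponential kernel `exp (a * x)`
with `a = -λ⁻¹` increasing in `λ`. Positivity of minors passes from a derivative to its
primitive vanishing at `0`: subtracting consecutive columns turns a minor of the primitive into a
determinant of increments, and the mean value theorem, applied to one column at a time, turns that
into a positive multiple of a minor of the derivative at interlacing points. The same argument
proves positivity of the minors of the exponential kernel by induction on their size, once the
first row has been normalized to ones. -/

section MeanValue

lemma exists_clm_sub_eq_mul_clm_deriv {E : Type*} [NormedAddCommGroup E] [NormedSpace ℝ E]
    (L : E →L[ℝ] ℝ) {γ γ' : ℝ → E} {a b : ℝ} (hab : a < b) (hγ : ContinuousOn γ (Set.Icc a b))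
    (hγ' : ∀ t ∈ Set.Ioo a b, HasDerivAt γ (γ' t) t) :
    ∃ v ∈ Set.Ioo a b, L (γ b - γ a) = (b - a) * L (γ' v) := by
  obtain ⟨v, hv, hslope⟩ := exists_hasDerivAt_eq_slope (L ∘ γ) (fun t => L (γ' t)) hab
    (L.continuous.comp_continuousOn hγ)
    (fun t ht => L.hasFDerivAt.comp_hasDerivAt t (hγ' t ht))
  refine ⟨v, hv, ?_⟩
  rw [hslope, mul_div_cancel₀ _ (sub_pos.2 hab).ne', map_sub]
  rfl

lemma exists_multilinear_sub_eq_prod_mul_multilinear_deriv {ι : Type*} [Fintype ι] {E : ι → Type*}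
    [∀ j, NormedAddCommGroup (E j)] [∀ j, NormedSpace ℝ (E j)]
    (L : ContinuousMultilinearMap ℝ E ℝ) {γ γ' : ∀ j, ℝ → E j} {a b : ι → ℝ}
    (hab : ∀ j, a j < b j) (hγ : ∀ j, ContinuousOn (γ j) (Set.Icc (a j) (b j)))
    (hγ' : ∀ j, ∀ t ∈ Set.Ioo (a j) (b j), HasDerivAt (γ j) (γ' j t) t) :
    ∃ v : ι → ℝ, (∀ j, v j ∈ Set.Ioo (a j) (b j)) ∧
      L (fun j => γ j (b j) - γ j (a j)) = (∏ j, (b j - a j)) * L (fun j => γ' j (v j)) := by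
  classical
  set Δ : ∀ j, E j := fun j => γ j (b j) - γ j (a j)
  suffices partialReplacement : ∀ S : Finset ι, ∃ v : ι → ℝ, (∀ j, v j ∈ Set.Ioo (a j) (b j)) ∧
      L Δ = (∏ j ∈ S, (b j - a j)) * L (S.piecewise (fun j => γ' j (v j)) Δ) by
    simpa only [Finset.piecewise_univ] using partialReplacement Finset.univ
  intro S
  induction S using Finset.induction_on with
  | empty =>
    choose v hv using fun j => exists_between (hab j)
    exact ⟨v, hv, by simp⟩
  | insert j S hj ih =>
    obtain ⟨v, hv, hL⟩ := ih
    set m := S.piecewise (fun i => γ' i (v i)) Δ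
    obtain ⟨w, hw, hLj⟩ :=
      exists_clm_sub_eq_mul_clm_deriv (L.toContinuousLinearMap m j) (hab j) (hγ j) (hγ' j)
    have update_increment : Function.update m j (Δ j) = m := by
      rw [Function.update_eq_self_iff]
      exact (Finset.piecewise_eq_of_notMem _ _ _ hj).symm
    have update_deriv : Function.update m j (γ' j w) =
        (insert j S).piecewise (fun i => γ' i (Function.update v j w i)) Δ := by
      rw [Finset.piecewise_insert, Function.update_self]
      congr 1
      refine S.piecewise_congr (fun i hi => ?_) fun i _ => rfl
      rw [Function.update_of_ne (ne_of_mem_of_not_mem hi hj)]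
    refine ⟨Function.update v j w, ?_, ?_⟩
    · intro i
      rcases eq_or_ne i j with rfl | hij
      · simpa using hw
      · simpa [hij] using hv i
    · change L (Function.update m j (Δ j)) = (b j - a j) * L (Function.update m j (γ' j w)) at hLj
      rw [update_increment, update_deriv] at hLj
      rw [hL, hLj, Finset.prod_insert hj]
      ring

lemma exists_det_sub_eq_prod_mul_det_deriv {ι : Type*} [Fintype ι] [DecidableEq ι]
    {f f' : ι → ι → ℝ → ℝ} {a b : ι → ℝ} (hab : ∀ j, a j < b j)
    (hf : ∀ i j, ContinuousOn (f i j) (Set.Icc (a j) (b j)))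
    (hf' : ∀ i j, ∀ t ∈ Set.Ioo (a j) (b j), HasDerivAt (f i j) (f' i j t) t) :
    ∃ v : ι → ℝ, (∀ j, v j ∈ Set.Ioo (a j) (b j)) ∧
      (Matrix.of fun i j => f i j (b j) - f i j (a j)).det =
        (∏ j, (b j - a j)) * (Matrix.of fun i j => f' i j (v j)).det := by
  let detCols : ContinuousMultilinearMap ℝ (fun _ : ι => ι → ℝ) ℝ :=
    ⟨Matrix.detRowAlternating.toMultilinearMap, continuous_id.matrix_det⟩
  obtain ⟨v, hv, hdet⟩ := exists_multilinear_sub_eq_prod_mul_multilinear_deriv detCols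
    (γ := fun j t i => f i j t) (γ' := fun j t i => f' i j t) hab
    (fun j => continuousOn_pi.2 fun i => hf i j)
    (fun j t ht => hasDerivAt_pi.2 fun i => hf' i j t ht)
  refine ⟨v, hv, ?_⟩
  rw [← Matrix.det_transpose, ← Matrix.det_transpose (Matrix.of fun i j => f' i j (v j))]
  exact hdet

end MeanValue

section ColumnDifferences

variable {R : Type*} [CommRing R] {n : ℕ}

lemma det_succ_eq_det_sub_castSucc_of_zero {g : Fin n → Fin (n + 1) → R} (hg : ∀ i, g i 0 = 0) :
    (Matrix.of fun i (j : Fin n) => g i j.succ).det =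
      (Matrix.of fun i (j : Fin n) => g i j.succ - g i j.castSucc).det := by
  cases n with
  | zero => simp only [Matrix.det_isEmpty]
  | succ n =>
    refine Matrix.det_eq_of_forall_col_eq_smul_add_pred (fun _ => 1) (fun i => ?_) fun i j => ?_
    · simp [hg]
    · simp

lemma det_eq_det_sub_castSucc_of_row_zero_eq_one {M : Matrix (Fin (n + 1)) (Fin (n + 1)) R}
    (hM : ∀ j, M 0 j = 1) :
    M.det = (Matrix.of fun i j : Fin n => M i.succ j.succ - M i.succ j.castSucc).det := by
  let D : Matrix (Fin (n + 1)) (Fin (n + 1)) R :=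
    Matrix.of fun i => Fin.cons (M i 0) fun j => M i j.succ - M i j.castSucc
  have det_eq : M.det = D.det :=
    Matrix.det_eq_of_forall_col_eq_smul_add_pred (fun _ => 1) (fun i => by simp [D])
      fun i j => by simp [D]
  rw [det_eq, Matrix.det_succ_row_zero, Fin.sum_univ_succ]
  simp [D, hM, Matrix.submatrix, Fin.zero_succAbove]

end ColumnDifferences

section PosMinors

variable {α α' β R : Type*} [Preorder α] [Preorder α'] [Preorder β] [CommRing R]

/-- The `n × n` minors of the kernel `K` with rows in `s` and columns in `t`, both listed in
increasing order, are positive. Strict total positivity of order infinity on `s × t` is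
`∀ n, HasPosMinorsOn n K s t`; listing rows and columns in decreasing order, as is also common,
gives the same determinants. -/
def HasPosMinorsOn [PartialOrder R] (n : ℕ) (K : α → β → R) (s : Set α) (t : Set β) : Prop :=
  ∀ ⦃a : Fin n → α⦄ ⦃u : Fin n → β⦄, StrictMono a → StrictMono u → (∀ i, a i ∈ s) →
    (∀ j, u j ∈ t) → 0 < (Matrix.of fun i j => K (a i) (u j)).det

namespace HasPosMinorsOn

variable {n : ℕ} {s : Set α} {t : Set β}

lemma det_pos_of_strictAnti [PartialOrder R] {K : α → β → R} (hK : HasPosMinorsOn n K s t)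
    {a : Fin n → α} {u : Fin n → β} (ha : StrictAnti a) (hu : StrictAnti u)
    (has : ∀ i, a i ∈ s) (hut : ∀ j, u j ∈ t) :
    0 < (Matrix.of fun i j => K (a i) (u j)).det := by
  rw [← Matrix.det_submatrix_equiv_self Fin.revPerm]
  exact hK (ha.comp Fin.rev_strictAnti) (hu.comp Fin.rev_strictAnti) (fun i => has i.rev)
    fun j => hut j.rev

lemma mono [PartialOrder R] {K : α → β → R} (hK : HasPosMinorsOn n K s t) {s' : Set α}
    {t' : Set β} (hs : s' ⊆ s) (ht : t' ⊆ t) : HasPosMinorsOn n K s' t' :=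
  fun _ _ ha hu has hut => hK ha hu (fun i => hs (has i)) fun j => ht (hut j)

lemma comp_left [PartialOrder R] {K : α → β → R} (hK : HasPosMinorsOn n K s t) {s' : Set α'}
    {φ : α' → α} (hφ : StrictMonoOn φ s') (hs : Set.MapsTo φ s' s) :
    HasPosMinorsOn n (fun a u => K (φ a) u) s' t :=
  fun _ _ ha hu has hut =>
    hK (fun _ _ hij => hφ (has _) (has _) (ha hij)) hu (fun i => hs (has i)) hut

lemma mul_left [PartialOrder R] [IsStrictOrderedRing R] {K : α → β → R}
    (hK : HasPosMinorsOn n K s t) {f : α → R} (hf : ∀ a ∈ s, 0 < f a) :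
    HasPosMinorsOn n (fun a u => f a * K a u) s t := by
  intro a u ha hu has hut
  have factor_out := Matrix.det_mul_column (fun i => f (a i)) (Matrix.of fun i j => K (a i) (u j))
  simp only [Matrix.of_apply] at factor_out
  rw [factor_out]
  exact mul_pos (Finset.prod_pos fun i _ => hf _ (has i)) (hK ha hu has hut)

lemma mul_right [PartialOrder R] [IsStrictOrderedRing R] {K : α → β → R}
    (hK : HasPosMinorsOn n K s t) {g : β → R} (hg : ∀ u ∈ t, 0 < g u) :
    HasPosMinorsOn n (fun a u => K a u * g u) s t := by
  intro a u ha hu has hut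
  have factor_out := Matrix.det_mul_row (fun j => g (u j)) (Matrix.of fun i j => K (a i) (u j))
  simp only [Matrix.of_apply, mul_comm (g _)] at factor_out
  rw [factor_out]
  exact mul_pos (Finset.prod_pos fun j _ => hg _ (hut j)) (hK ha hu has hut)

lemma det_sub_castSucc_pos {K K' : α → ℝ → ℝ} {D : Set ℝ} (hD : D.OrdConnected)
    (hK' : HasPosMinorsOn n K' s (interior D)) (hcont : ∀ a ∈ s, ContinuousOn (K a) D)
    (hderiv : ∀ a ∈ s, ∀ x ∈ interior D, HasDerivAt (K a) (K' a x) x)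
    {a : Fin n → α} {u : Fin (n + 1) → ℝ} (ha : StrictMono a) (hu : StrictMono u)
    (has : ∀ i, a i ∈ s) (huD : ∀ j, u j ∈ D) :
    0 < (Matrix.of fun i (j : Fin n) => K (a i) (u j.succ) - K (a i) (u j.castSucc)).det := by
  have Icc_subset (j : Fin n) : Set.Icc (u j.castSucc) (u j.succ) ⊆ D := hD.out (huD _) (huD _)
  have Ioo_subset (j : Fin n) : Set.Ioo (u j.castSucc) (u j.succ) ⊆ interior D :=
    interior_Icc.symm.subset.trans (interior_mono (Icc_subset j))
  have lt_succ (j : Fin n) : u j.castSucc < u j.succ := hu Fin.castSucc_lt_succ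
  obtain ⟨v, hv, hdet⟩ := exists_det_sub_eq_prod_mul_det_deriv
    (f := fun i _ => K (a i)) (f' := fun i _ => K' (a i)) lt_succ
    (fun i j => (hcont _ (has i)).mono (Icc_subset j))
    (fun i j x hx => hderiv _ (has i) x (Ioo_subset j hx))
  have v_strictMono : StrictMono v := fun i j hij =>
    calc v i < u i.succ := (hv i).2
      _ ≤ u j.castSucc := hu.monotone (Fin.succ_le_castSucc_iff.2 hij)
      _ < v j := (hv j).1
  rw [hdet]
  exact mul_pos (Finset.prod_pos fun j _ => sub_pos.2 (lt_succ j))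
    (hK' ha v_strictMono has fun j => Ioo_subset j (hv j))

lemma of_hasDerivAt {K K' : α → ℝ → ℝ} {c : ℝ} (hK' : HasPosMinorsOn n K' s (Set.Ioi c))
    (hcont : ∀ a ∈ s, ContinuousOn (K a) (Set.Ici c))
    (hderiv : ∀ a ∈ s, ∀ x ∈ Set.Ioi c, HasDerivAt (K a) (K' a x) x)
    (hzero : ∀ a ∈ s, K a c = 0) : HasPosMinorsOn n K s (Set.Ioi c) := by
  intro a x ha hx has hxc
  let u : Fin (n + 1) → ℝ := Fin.cons c x
  have u_strictMono : StrictMono u := Fin.strictMono_cons.2 ⟨hxc, hx⟩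
  have u_mem (j : Fin (n + 1)) : u j ∈ Set.Ici c := u_strictMono.monotone (Fin.zero_le j)
  rw [← interior_Ici] at hK' hderiv
  have increments_pos :=
    det_sub_castSucc_pos Set.ordConnected_Ici hK' hcont hderiv ha u_strictMono has u_mem
  rwa [← det_succ_eq_det_sub_castSucc_of_zero (g := fun i j => K (a i) (u j))
    fun i => hzero _ (has i)] at increments_pos

end HasPosMinorsOn

end PosMinors

lemma hasDerivAt_exp_mul (b x : ℝ) :
    HasDerivAt (fun x => Real.exp (b * x)) (b * Real.exp (b * x)) x := by
  simpa [mul_comm] using ((hasDerivAt_id x).const_mul b).exp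

lemma hasPosMinorsOn_exp_mul (n : ℕ) :
    HasPosMinorsOn n (fun a u : ℝ => Real.exp (a * u)) Set.univ Set.univ := by
  induction n with
  | zero => intro a u _ _ _ _; simp
  | succ n ih =>
    intro a u ha hu _ _
    let M : Matrix (Fin (n + 1)) (Fin (n + 1)) ℝ :=
      Matrix.of fun i j => Real.exp ((a i - a 0) * u j)
    have deriv_minors : HasPosMinorsOn n (fun b x : ℝ => b * Real.exp (b * x))
        (Set.Ioi 0) (interior Set.univ) :=
      (ih.mono (Set.subset_univ _) (Set.subset_univ _)).mul_left fun _ hb => hb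
    have M_det_pos : 0 < M.det := by
      rw [det_eq_det_sub_castSucc_of_row_zero_eq_one fun j => by simp [M]]
      exact HasPosMinorsOn.det_sub_castSucc_pos Set.ordConnected_univ deriv_minors
        (fun b _ x _ => (hasDerivAt_exp_mul b x).continuousAt.continuousWithinAt)
        (fun b _ x _ => hasDerivAt_exp_mul b x)
        (a := fun i => a i.succ - a 0)
        (fun i j hij => sub_lt_sub_right (ha (Fin.succ_lt_succ_iff.2 hij)) _) hu
        (fun i => sub_pos.2 (ha i.succ_pos)) fun _ => Set.mem_univ _
    have normalize_first_row : (Matrix.of fun i j => Real.exp (a i * u j)).det =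
        (∏ j, Real.exp (a 0 * u j)) * M.det := by
      rw [← Matrix.det_mul_row]
      congr 1
      ext i j
      simp only [M, Matrix.of_apply, ← Real.exp_add]
      ring_nf
    rw [normalize_first_row]
    exact mul_pos (Finset.prod_pos fun _ _ => Real.exp_pos _) M_det_pos

section Weight

/-- The function `γ(k + 1, t) = ∫₀ᵗ s ^ k * exp (-s) ds` (the lower incomplete gamma function at a
positive integer), in closed form, so that `w_{3,k}(λ, x)` is its value at `x / λ`. -/
noncomputable def lowerGamma (k : ℕ) (t : ℝ) : ℝ :=
  (k.factorial : ℝ) *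
    (1 - Real.exp (-t) * ∑ p ∈ Finset.range (k + 1), t ^ p / (p.factorial : ℝ))

variable (k : ℕ)

lemma lowerGamma_zero_right : lowerGamma k 0 = 0 := by
  simp [lowerGamma, Finset.sum_range_succ']

lemma hasDerivAt_sum_range_pow_div_factorial (t : ℝ) :
    HasDerivAt (fun t : ℝ => ∑ p ∈ Finset.range (k + 1), t ^ p / (p.factorial : ℝ))
      (∑ p ∈ Finset.range k, t ^ p / (p.factorial : ℝ)) t := by
  refine (HasDerivAt.fun_sum fun p _ => (hasDerivAt_pow p t).div_const _).congr_deriv ?_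
  rw [Finset.sum_range_succ']
  simp only [Nat.cast_zero, zero_mul, zero_div, add_zero, Nat.add_sub_cancel]
  refine Finset.sum_congr rfl fun p _ => ?_
  rw [Nat.factorial_succ, Nat.cast_mul, mul_div_mul_left _ _ (Nat.cast_ne_zero.2 p.succ_ne_zero)]

lemma hasDerivAt_lowerGamma (t : ℝ) :
    HasDerivAt (lowerGamma k) (t ^ k * Real.exp (-t)) t := by
  have deriv := (((hasDerivAt_neg t).exp.mul (hasDerivAt_sum_range_pow_div_factorial k t)).const_sub
    1).const_mul (k.factorial : ℝ)
  refine deriv.congr_deriv ?_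
  have factorial_ne_zero : (k.factorial : ℝ) ≠ 0 := by positivity
  rw [Finset.sum_range_succ]
  field_simp
  ring

lemma hasDerivAt_lowerGamma_div (lam x : ℝ) :
    HasDerivAt (fun x => lowerGamma k (x / lam))
      (lam⁻¹ ^ (k + 1) * Real.exp (-lam⁻¹ * x) * x ^ k) x := by
  refine ((hasDerivAt_lowerGamma k (x / lam)).comp x
    ((hasDerivAt_id x).div_const lam)).congr_deriv ?_
  rw [div_eq_mul_inv, mul_pow, one_div, neg_mul, mul_comm lam⁻¹ x]
  ring

lemma hasPosMinorsOn_lowerGamma_div (n : ℕ) :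
    HasPosMinorsOn n (fun lam x : ℝ => lowerGamma k (x / lam)) (Set.Ioi 0) (Set.Ioi 0) := by
  have neg_inv_strictMonoOn : StrictMonoOn (fun lam : ℝ => -lam⁻¹) (Set.Ioi 0) :=
    fun _ hlam _ _ hlt => neg_lt_neg (inv_strictAnti₀ hlam hlt)
  have exp_minors : HasPosMinorsOn n (fun lam x : ℝ => Real.exp (-lam⁻¹ * x))
      (Set.Ioi 0) (Set.Ioi 0) :=
    ((hasPosMinorsOn_exp_mul n).comp_left neg_inv_strictMonoOn (Set.mapsTo_univ _ _)).mono
      subset_rfl (Set.subset_univ _)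
  have deriv_minors : HasPosMinorsOn n
      (fun lam x : ℝ => lam⁻¹ ^ (k + 1) * Real.exp (-lam⁻¹ * x) * x ^ k)
      (Set.Ioi 0) (Set.Ioi 0) :=
    (exp_minors.mul_left fun _ hlam => pow_pos (inv_pos.2 hlam) _).mul_right
      fun _ hx => pow_pos hx _
  exact deriv_minors.of_hasDerivAt
    (fun lam _ x _ => (hasDerivAt_lowerGamma_div k lam x).continuousAt.continuousWithinAt)
    (fun lam _ x _ => hasDerivAt_lowerGamma_div k lam x)
    fun lam _ => by rw [zero_div, lowerGamma_zero_right]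

end Weight

/-- For each integer `k ≥ 0`, the weight function
`w_{3,k}(λ,x) = k!·[1 − e^{−x/λ} Σ_{j=0}^k (x/λ)^j / j!]` is strictly totally positive of
order infinity on `(0,∞)²`. -/
theorem stmt_13 (k : ℕ) :
    ∀ r : ℕ, 1 ≤ r → ∀ lam x : Fin r → ℝ,
      (∀ i : Fin r, 0 < lam i) → (∀ j : Fin r, 0 < x j) →
      (∀ i j : Fin r, i < j → lam j < lam i) →
      (∀ i j : Fin r, i < j → x j < x i) →
      0 < Matrix.det (Matrix.of fun i j : Fin r =>
        (Nat.factorial k : ℝ) *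
          (1 - Real.exp (-(x j) / lam i) *
            ∑ p ∈ Finset.range (k + 1), (x j / lam i) ^ p / (Nat.factorial p : ℝ))) := by
  intro r _ lam x hlam hx lam_anti x_anti
  have lowerGamma_det_pos := (hasPosMinorsOn_lowerGamma_div k r).det_pos_of_strictAnti
    (fun i j => lam_anti i j) (fun i j => x_anti i j) hlam hx
  simpa only [lowerGamma, neg_div] using lowerGamma_det_pos
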